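/- Suppose the pair (A,B) is controllable (the controllability matrix [B, AB, …, A^{n-1}B] has rank n) and A is nonsingular. Then the value function V of the maximum hands-off control problem is continuous on the reachable set R. -/

import Mathlib

open MeasureTheory Set

noncomputable section

/-- Controllability matrix `[B, AB, ..., A^{n-1}B]`. -/
def ctrbMatrix (n : ℕ) (A : Matrix (Fin n) (Fin n) ℝ) (B : Fin n → ℝ) :
    Matrix (Fin n) (Fin n) ℝ :=
  Matrix.of fun i j => (A ^ (j : ℕ)).mulVec B i

/-- `∫₀ᵀ e^{-As} B u(s) ds`. -/
def stateInt (n : ℕ) (T : ℝ) (A : Matrix (Fin n) (Fin n) ℝ) (B : Fin n → ℝ)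
    (u : ℝ → ℝ) : Fin n → ℝ :=
  ∫ s in Icc (0:ℝ) T, u s • (NormedSpace.exp ((-s) • A)).mulVec B

/-- The magnitude constraint `‖u‖_∞ ≤ 1` on `[0,T]`. -/
def MagBdd (T : ℝ) (u : ℝ → ℝ) : Prop := ∀ t ∈ Icc (0:ℝ) T, |u t| ≤ 1

/-- The `L¹` norm of `u` on `[0,T]`. -/
def L1Norm (T : ℝ) (u : ℝ → ℝ) : ℝ := ∫ t in Icc (0:ℝ) T, |u t|

/-- The `L⁰` norm of `u`: Lebesgue measure of `{t ∈ [0,T] : u t ≠ 0}`. -/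
def L0Norm (T : ℝ) (u : ℝ → ℝ) : ℝ := (volume {t ∈ Icc (0:ℝ) T | u t ≠ 0}).toReal

/-- Admissible controls steering `ξ` to `0` at time `T`:
`∫₀ᵀ e^{-As} B u(s) ds = -ξ` and `‖u‖_∞ ≤ 1`. -/
def Admissible (n : ℕ) (T : ℝ) (A : Matrix (Fin n) (Fin n) ℝ) (B : Fin n → ℝ)
    (ξ : Fin n → ℝ) (u : ℝ → ℝ) : Prop :=
  Measurable u ∧ MagBdd T u ∧ stateInt n T A B u = -ξ

/-- Value function of the maximum hands-off (`L⁰`-optimal) control problem. -/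
def V0 (n : ℕ) (T : ℝ) (A : Matrix (Fin n) (Fin n) ℝ) (B : Fin n → ℝ)
    (ξ : Fin n → ℝ) : ℝ :=
  sInf {c | ∃ u, Admissible n T A B ξ u ∧ c = L0Norm T u}

/-- Value function of the `L¹`-optimal control problem. -/
def V1 (n : ℕ) (T : ℝ) (A : Matrix (Fin n) (Fin n) ℝ) (B : Fin n → ℝ)
    (ξ : Fin n → ℝ) : ℝ :=
  sInf {c | ∃ u, Admissible n T A B ξ u ∧ c = L1Norm T u}

/-- The reachable set `R`. -/
def Reach (n : ℕ) (T : ℝ) (A : Matrix (Fin n) (Fin n) ℝ) (B : Fin n → ℝ) :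
    Set (Fin n → ℝ) :=
  {x | ∃ u, Measurable u ∧ MagBdd T u ∧ x = stateInt n T A B u}

/-- The set `R_α`. -/
def ReachL1 (n : ℕ) (T : ℝ) (A : Matrix (Fin n) (Fin n) ℝ) (B : Fin n → ℝ)
    (α : ℝ) : Set (Fin n → ℝ) :=
  {x | ∃ u, Measurable u ∧ MagBdd T u ∧ L1Norm T u ≤ α ∧ x = stateInt n T A B u}

/-- The kernel `e^{-As}B`. -/
def gk {n : ℕ} (A : Matrix (Fin n) (Fin n) ℝ) (B : Fin n → ℝ) (s : ℝ) : Fin n → ℝ :=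
  (NormedSpace.exp ((-s) • A)).mulVec B

section ExpFacts
attribute [local instance] Matrix.linftyOpNormedRing Matrix.linftyOpNormedAlgebra

/-- Right multiplication against a fixed vector followed by a functional. -/
def evCLM {n : ℕ} (B : Fin n → ℝ) (f : (Fin n → ℝ) →L[ℝ] ℝ) :
    Matrix (Fin n) (Fin n) ℝ →L[ℝ] ℝ :=
  LinearMap.toContinuousLinearMap
    (f.toLinearMap ∘ₗ (LinearMap.applyₗ B) ∘ₗ (Matrix.toLin' (R := ℝ)).toLinearMap)

lemma evCLM_apply {n : ℕ} (B : Fin n → ℝ) (f : (Fin n → ℝ) →L[ℝ] ℝ)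
    (M : Matrix (Fin n) (Fin n) ℝ) : evCLM B f M = f (M.mulVec B) := by
  simp [evCLM]

lemma gk_deriv {n : ℕ} (A : Matrix (Fin n) (Fin n) ℝ) (B : Fin n → ℝ)
    (f : (Fin n → ℝ) →L[ℝ] ℝ) (s : ℝ) :
    HasDerivAt (fun s => f (gk A B s)) (-(f (A.mulVec (gk A B s)))) s := by
  have h := hasDerivAt_exp_smul_const' (𝕂 := ℝ) A (-s)
  have h2 := h.scomp s (hasDerivAt_neg s)
  have h3 := (evCLM B f).hasFDerivAt.comp_hasDerivAt s h2
  have e : (fun s => f (gk A B s)) = (evCLM B f) ∘ ((fun u : ℝ => NormedSpace.exp (u • A)) ∘ Neg.neg) := by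
    funext t
    simp [evCLM_apply, gk]
  have e2 : (evCLM B f) ((-1 : ℝ) • (A * NormedSpace.exp (-s • A))) =
      -(f (A.mulVec (gk A B s))) := by
    rw [neg_one_smul, map_neg, evCLM_apply, ← Matrix.mulVec_mulVec]
    rfl
  rw [e, ← e2]
  exact h3

lemma gk_analytic {n : ℕ} (A : Matrix (Fin n) (Fin n) ℝ) (B : Fin n → ℝ)
    (f : (Fin n → ℝ) →L[ℝ] ℝ) : AnalyticOnNhd ℝ (fun s => f (gk A B s)) univ := by
  intro s _
  have e : (fun s => f (gk A B s)) = (fun s : ℝ => evCLM B f (NormedSpace.exp ((-s) • A))) := by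
    funext t
    simp [evCLM_apply, gk]
  rw [e]
  have h1 : AnalyticAt ℝ (fun s : ℝ => (-s) • A) s := (analyticAt_id.neg).smul analyticAt_const
  have h2 : AnalyticAt ℝ (NormedSpace.exp : Matrix (Fin n) (Fin n) ℝ → _) ((-s) • A) :=
    NormedSpace.exp_analytic _
  have h3 := AnalyticAt.fun_comp (f := fun s : ℝ => (-s) • A) h2 h1
  exact ((evCLM B f).analyticAt _).fun_comp h3

end ExpFacts

lemma gk_cont {n : ℕ} (A : Matrix (Fin n) (Fin n) ℝ) (B : Fin n → ℝ) : Continuous (gk A B) := by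
  refine continuous_pi fun i => ?_
  have := (gk_analytic A B (ContinuousLinearMap.proj i)).continuousOn
  rw [continuousOn_univ] at this
  simpa using this

lemma gk_zero {n : ℕ} (A : Matrix (Fin n) (Fin n) ℝ) (B : Fin n → ℝ) : gk A B 0 = B := by
  simp [gk]

lemma not_const {n : ℕ} (A : Matrix (Fin n) (Fin n) ℝ) (B : Fin n → ℝ)
    (hctrb : (ctrbMatrix n A B).rank = n) (hA : A.det ≠ 0)
    (f : (Fin n → ℝ) →L[ℝ] ℝ) (hf : f ≠ 0) (c : ℝ) : ∃ s, f (gk A B s) ≠ c := by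
  by_contra! hc
  let L : (Fin n → ℝ) →L[ℝ] (Fin n → ℝ) := LinearMap.toContinuousLinearMap (Matrix.mulVecLin A)
  have hL : ∀ v, L v = A.mulVec v := fun v => by simp [L]
  have step : ∀ (h : (Fin n → ℝ) →L[ℝ] ℝ) (c : ℝ), (∀ s, h (gk A B s) = c) →
      ∀ s, h (A.mulVec (gk A B s)) = 0 := by
    intro h c hh s
    have h1 := gk_deriv A B h s
    have h2 : (fun s => h (gk A B s)) = fun _ => c := funext hh
    rw [h2] at h1
    have := h1.unique (hasDerivAt_const s c)
    linarith
  have key : ∀ k : ℕ, ∀ s, f (A.mulVec ((A ^ k).mulVec (gk A B s))) = 0 := by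
    intro k
    induction k with
    | zero => intro s; simpa using step f c hc s
    | succ k ih =>
      intro s
      let Lk : (Fin n → ℝ) →L[ℝ] (Fin n → ℝ) :=
        LinearMap.toContinuousLinearMap (Matrix.mulVecLin (A ^ k))
      have := step (f.comp (L.comp Lk)) 0 (by intro s; simpa [Lk, L] using ih s) s
      simpa [Lk, L, pow_succ, Matrix.mulVec_mulVec] using this
  have hspan : Submodule.span ℝ (Set.range (ctrbMatrix n A B).col) = ⊤ := by
    apply Submodule.eq_top_of_finrank_eq
    rw [← Matrix.rank_eq_finrank_span_cols, hctrb]; simp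
  have hz : (f.comp L : (Fin n → ℝ) →L[ℝ] ℝ).toLinearMap = 0 := by
    apply LinearMap.ext_on hspan
    rintro _ ⟨j, rfl⟩
    have := key j 0
    rw [gk_zero] at this
    have hcol : (ctrbMatrix n A B).col j = (A ^ (j : ℕ)).mulVec B := rfl
    rw [hcol]
    simpa [L] using this
  apply hf
  ext v
  have hAu : IsUnit A.det := isUnit_iff_ne_zero.2 hA
  have := LinearMap.congr_fun hz (A⁻¹.mulVec v)
  simpa [L, Matrix.mulVec_mulVec, Matrix.mul_nonsing_inv A hAu] using this

lemma null_level {n : ℕ} (A : Matrix (Fin n) (Fin n) ℝ) (B : Fin n → ℝ)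
    (hctrb : (ctrbMatrix n A B).rank = n) (hA : A.det ≠ 0)
    (f : (Fin n → ℝ) →L[ℝ] ℝ) (hf : f ≠ 0) (c : ℝ) : ∀ᵐ s, f (gk A B s) ≠ c := by
  obtain ⟨s, hs⟩ := not_const A B hctrb hA f hf c
  have h1 : AnalyticOnNhd ℝ (fun s => f (gk A B s) - c) univ :=
    (gk_analytic A B f).sub analyticOnNhd_const
  have h2 := h1.preimage_zero_mem_codiscrete (x := s) (sub_ne_zero.2 hs)
  have h3 := ae_restrict_le_codiscreteWithin (μ := volume) MeasurableSet.univ h2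
  rw [Measure.restrict_univ] at h3
  filter_upwards [h3] with t ht
  simpa [sub_eq_zero] using ht

lemma small_of_weight (T : ℝ) (w : ℝ → ℝ) (hw : Continuous w) (hw0 : ∀ s, 0 ≤ w s)
    (hpos : ∀ᵐ s, 0 < w s) (η : ℝ) (hη : 0 < η) :
    ∃ ε > 0, ∀ f : ℝ → ℝ, Measurable f → (∀ s ∈ Icc 0 T, 0 ≤ f s ∧ f s ≤ 2) →
      ∫ s in Icc 0 T, w s * f s ≤ ε → ∫ s in Icc 0 T, f s ≤ η := by
  have hlim : Filter.Tendsto (fun k : ℕ => ∫ s in Icc 0 T, Real.exp (-(k * w s))) Filter.atTop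
      (nhds (∫ s in Icc 0 T, (0:ℝ))) := by
    apply tendsto_integral_of_dominated_convergence (fun _ => (1:ℝ))
    · intro k
      exact (by fun_prop : Continuous fun s => Real.exp (-(k * w s))).aestronglyMeasurable
    · exact integrable_const _
    · intro k
      refine Filter.Eventually.of_forall fun s => ?_
      rw [Real.norm_eq_abs, Real.abs_exp]
      apply Real.exp_le_one_iff.2
      have := hw0 s
      have : 0 ≤ (k:ℝ) * w s := by positivity
      linarith
    · filter_upwards [ae_restrict_of_ae hpos] with s hs
      apply Real.tendsto_exp_neg_atTop_nhds_zero.comp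
      exact tendsto_natCast_atTop_atTop.atTop_mul_const hs
  simp only [integral_zero] at hlim
  obtain ⟨k, hk⟩ := (hlim.eventually (gt_mem_nhds (show 0 < η / 4 by positivity))).exists
  refine ⟨η / (2 * (k + 1)), by positivity, fun f hfm hf hle => ?_⟩
  have hfi : IntegrableOn f (Icc 0 T) := by
    refine Integrable.mono' (integrable_const (2:ℝ)) hfm.aestronglyMeasurable ?_
    filter_upwards [ae_restrict_mem measurableSet_Icc] with s hs
    rw [Real.norm_eq_abs, abs_of_nonneg (hf s hs).1]; exact (hf s hs).2
  have hwi : IntegrableOn w (Icc 0 T) := hw.integrableOn_Icc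
  have hwf : IntegrableOn (fun s => w s * f s) (Icc 0 T) := by
    refine Integrable.mono' (hwi.const_mul 2) (hw.measurable.mul hfm).aestronglyMeasurable ?_
    filter_upwards [ae_restrict_mem measurableSet_Icc] with s hs
    rw [Real.norm_eq_abs, abs_mul, abs_of_nonneg (hf s hs).1, abs_of_nonneg (hw0 s)]
    nlinarith [hf s hs, hw0 s]
  have hei : IntegrableOn (fun s => Real.exp (-(k * w s))) (Icc 0 T) :=
    (by fun_prop : Continuous fun s => Real.exp (-(k * w s))).integrableOn_Icc
  have hb : ∫ s in Icc 0 T, f s ≤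
      ∫ s in Icc 0 T, ((k:ℝ) * (w s * f s) + 2 * Real.exp (-(k * w s))) := by
    apply setIntegral_mono_on hfi ((hwf.const_mul _).add (hei.const_mul _)) measurableSet_Icc
    intro s hs
    have h1 := Real.add_one_le_exp (-(k * w s))
    have h2 := Real.exp_pos (-(k * w s))
    obtain ⟨h3, h4⟩ := hf s hs
    show f s ≤ (k:ℝ) * (w s * f s) + 2 * Real.exp (-(k * w s))
    nlinarith
  rw [integral_add (hwf.const_mul _) (hei.const_mul _), integral_const_mul, integral_const_mul] at hb
  have hk0 : (0:ℝ) ≤ k := Nat.cast_nonneg k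
  have : (k:ℝ) * (∫ s in Icc 0 T, w s * f s) ≤ η / 2 := by
    calc _ ≤ (k:ℝ) * (η / (2 * (k + 1))) := by gcongr
      _ ≤ η / 2 := by
        rw [← mul_div_assoc, div_le_div_iff₀ (by positivity) (by positivity)]
        nlinarith
  linarith

lemma integrable_ctrl {E : Type*} [NormedAddCommGroup E] [NormedSpace ℝ E] (T : ℝ)
    (h : ℝ → E) (hh : Continuous h) (u : ℝ → ℝ)
    (hu : Measurable u) (c : ℝ) (hb : ∀ t ∈ Icc 0 T, |u t| ≤ c) :
    IntegrableOn (fun s => u s • h s) (Icc 0 T) := by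
  have hi : IntegrableOn h (Icc 0 T) := hh.integrableOn_Icc
  refine Integrable.mono' (hi.norm.const_mul c)
    (hu.aestronglyMeasurable.smul hi.aestronglyMeasurable) ?_
  filter_upwards [ae_restrict_mem measurableSet_Icc] with s hs
  rw [norm_smul, Real.norm_eq_abs]
  exact mul_le_mul_of_nonneg_right (hb s hs) (norm_nonneg _)

lemma integrable_ctrl' (T : ℝ) (u : ℝ → ℝ)
    (hu : Measurable u) (c : ℝ) (hb : ∀ t ∈ Icc 0 T, |u t| ≤ c) :
    IntegrableOn u (Icc 0 T) := by
  simpa using integrable_ctrl T (fun _ => (1:ℝ)) continuous_const u hu c hb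

lemma L0_eq (T : ℝ) (u : ℝ → ℝ) (hu : Measurable u) :
    L0Norm T u = ∫ s in Icc (0:ℝ) T, ({t | u t ≠ 0} : Set ℝ).indicator (fun _ => (1:ℝ)) s := by
  have hm : MeasurableSet {t | u t ≠ 0} := hu (measurableSet_singleton 0).compl
  rw [integral_indicator hm, Measure.restrict_restrict hm, setIntegral_const]
  simp only [L0Norm, smul_eq_mul, mul_one, Measure.real]
  congr 2
  ext t
  simp [and_comm]

lemma ind_int (T : ℝ) (u : ℝ → ℝ) (hu : Measurable u) :
    IntegrableOn (({t | u t ≠ 0} : Set ℝ).indicator (fun _ => (1:ℝ))) (Icc 0 T) := by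
  have hm : MeasurableSet {t | u t ≠ 0} := hu (measurableSet_singleton 0).compl
  exact (integrable_const (1:ℝ)).indicator hm

lemma L1_le_L0 (T : ℝ) (u : ℝ → ℝ) (hu : Measurable u) (hb : MagBdd T u) :
    L1Norm T u ≤ L0Norm T u := by
  rw [L0_eq T u hu]
  refine setIntegral_mono_on (integrable_ctrl' T u hu 1 hb).abs (ind_int T u hu)
    measurableSet_Icc ?_
  intro s hs
  by_cases h : u s = 0
  · simp [h]
  · simpa [h] using hb s hs

lemma L1_eq_L0 (T : ℝ) (u : ℝ → ℝ) (hu : Measurable u) (hb : ∀ s, u s = 0 ∨ |u s| = 1) :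
    L0Norm T u = L1Norm T u := by
  rw [L0_eq T u hu]
  refine integral_congr_ae (Filter.Eventually.of_forall ?_)
  intro s
  rcases hb s with h | h
  · simp [h]
  · have : u s ≠ 0 := by rintro h0; simp [h0] at h
    simp [h, this]

lemma L0_le (T : ℝ) (hT : 0 < T) (u : ℝ → ℝ) : L0Norm T u ≤ T := by
  have h1 : volume {t ∈ Icc (0:ℝ) T | u t ≠ 0} ≤ volume (Icc (0:ℝ) T) :=
    measure_mono fun t ht => ht.1
  have h2 := ENNReal.toReal_mono (by simp) h1
  simpa [L0Norm, hT.le] using h2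

lemma L0_nonneg (T : ℝ) (u : ℝ → ℝ) : 0 ≤ L0Norm T u := ENNReal.toReal_nonneg

lemma L1_nonneg (T : ℝ) (u : ℝ → ℝ) : 0 ≤ L1Norm T u := integral_nonneg fun _ => abs_nonneg _

section Ctrl
variable {n : ℕ} {T : ℝ} {A : Matrix (Fin n) (Fin n) ℝ} {B : Fin n → ℝ}

lemma gInt {u : ℝ → ℝ} (hu : Measurable u) {c : ℝ} (hb : ∀ t ∈ Icc 0 T, |u t| ≤ c) :
    IntegrableOn (fun s => u s • gk A B s) (Icc 0 T) :=
  integrable_ctrl T _ (gk_cont A B) u hu c hb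

lemma fInt (f : (Fin n → ℝ) →L[ℝ] ℝ) {u : ℝ → ℝ} (hu : Measurable u) {c : ℝ}
    (hb : ∀ t ∈ Icc 0 T, |u t| ≤ c) :
    IntegrableOn (fun s => u s * f (gk A B s)) (Icc 0 T) :=
  integrable_ctrl T _ (f.continuous.comp (gk_cont A B)) u hu c hb

lemma f_stateInt (f : (Fin n → ℝ) →L[ℝ] ℝ) {u : ℝ → ℝ} (hu : Measurable u)
    (hb : MagBdd T u) :
    f (stateInt n T A B u) = ∫ s in Icc 0 T, u s * f (gk A B s) := by
  have := f.integral_comp_comm (gInt (A := A) (B := B) hu hb)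
  simp only [map_smul, smul_eq_mul] at this
  exact this.symm

lemma stateInt_neg (u : ℝ → ℝ) : stateInt n T A B (fun s => - u s) = - stateInt n T A B u := by
  simp only [stateInt, neg_smul, integral_neg]

lemma reach_iff {x : Fin n → ℝ} : x ∈ Reach n T A B ↔ ∃ u, Admissible n T A B x u := by
  constructor
  · rintro ⟨u, h1, h2, h3⟩
    exact ⟨fun s => - u s, h1.neg, fun t ht => by simpa using h2 t ht, by rw [stateInt_neg, h3]⟩
  · rintro ⟨u, h1, h2, h3⟩
    exact ⟨fun s => - u s, h1.neg, fun t ht => by simpa using h2 t ht,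
      by rw [stateInt_neg, h3, neg_neg]⟩

lemma adm_comb {x y : Fin n → ℝ} {u v : ℝ → ℝ} (hu : Admissible n T A B x u)
    (hv : Admissible n T A B y v) {a b : ℝ} (ha : 0 ≤ a) (hb : 0 ≤ b) (hab : a + b = 1) :
    Admissible n T A B (a • x + b • y) (fun s => a * u s + b * v s) := by
  obtain ⟨u1, u2, u3⟩ := hu
  obtain ⟨v1, v2, v3⟩ := hv
  refine ⟨(u1.const_mul a).add (v1.const_mul b), fun t ht => ?_, ?_⟩
  · have h1 := abs_le.1 (u2 t ht)
    have h2 := abs_le.1 (v2 t ht)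
    rw [abs_le]
    constructor <;> nlinarith
  · have h := integral_add ((gInt (A := A) (B := B) u1 u2).smul a)
      ((gInt (A := A) (B := B) v1 v2).smul b)
    simp only [Pi.smul_apply, integral_smul] at h
    have e : ∀ s, (a * u s + b * v s) • gk A B s = a • u s • gk A B s + b • v s • gk A B s := by
      intro s
      rw [add_smul, mul_smul, mul_smul]
    change ∫ s in Icc 0 T, (a * u s + b * v s) • gk A B s = _
    simp only [e]
    refine h.trans ?_
    change a • stateInt n T A B u + b • stateInt n T A B v = _
    rw [u3, v3, smul_neg, smul_neg, neg_add]

lemma L1_comb {u v : ℝ → ℝ} (u1 : Measurable u) (u2 : MagBdd T u) (v1 : Measurable v)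
    (v2 : MagBdd T v) {a b : ℝ} (ha : 0 ≤ a) (hb : 0 ≤ b) :
    L1Norm T (fun s => a * u s + b * v s) ≤ a * L1Norm T u + b * L1Norm T v := by
  have iu := integrable_ctrl' T u u1 1 u2
  have iv := integrable_ctrl' T v v1 1 v2
  simp only [L1Norm]
  rw [← integral_const_mul, ← integral_const_mul, ← integral_add (iu.abs.const_mul a)
    (iv.abs.const_mul b)]
  refine integral_mono (((iu.const_mul a).add (iv.const_mul b)).abs)
    ((iu.abs.const_mul a).add (iv.abs.const_mul b)) fun s => ?_
  show |a * u s + b * v s| ≤ a * |u s| + b * |v s|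
  refine (abs_add_le _ _).trans ?_
  rw [abs_mul, abs_mul, abs_of_nonneg ha, abs_of_nonneg hb]

lemma reach_convex : Convex ℝ (Reach n T A B) := by
  intro x hx y hy a b ha hb hab
  obtain ⟨u, hu⟩ := reach_iff.1 hx
  obtain ⟨v, hv⟩ := reach_iff.1 hy
  exact reach_iff.2 ⟨_, adm_comb hu hv ha hb hab⟩

lemma V1_le {x : Fin n → ℝ} {u : ℝ → ℝ} (hu : Admissible n T A B x u) :
    V1 n T A B x ≤ L1Norm T u :=
  csInf_le ⟨0, by rintro c ⟨u, -, rfl⟩; exact L1_nonneg T u⟩ ⟨u, hu, rfl⟩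

lemma V0_le {x : Fin n → ℝ} {u : ℝ → ℝ} (hu : Admissible n T A B x u) :
    V0 n T A B x ≤ L0Norm T u :=
  csInf_le ⟨0, by rintro c ⟨u, -, rfl⟩; exact L0_nonneg T u⟩ ⟨u, hu, rfl⟩

lemma le_V0 {x : Fin n → ℝ} (hx : x ∈ Reach n T A B) {c : ℝ}
    (h : ∀ u, Admissible n T A B x u → c ≤ L0Norm T u) : c ≤ V0 n T A B x := by
  obtain ⟨u, hu⟩ := reach_iff.1 hx
  exact le_csInf ⟨_, u, hu, rfl⟩ (by rintro c ⟨u, hu, rfl⟩; exact h u hu)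

lemma exists_V1 {x : Fin n → ℝ} (hx : x ∈ Reach n T A B) {ε : ℝ} (hε : 0 < ε) :
    ∃ u, Admissible n T A B x u ∧ L1Norm T u < V1 n T A B x + ε := by
  obtain ⟨u, hu⟩ := reach_iff.1 hx
  obtain ⟨_, ⟨v, hv, rfl⟩, h⟩ := exists_lt_of_csInf_lt
    (s := {c | ∃ u, Admissible n T A B x u ∧ c = L1Norm T u}) ⟨_, u, hu, rfl⟩
    (show sInf _ < V1 n T A B x + ε from lt_add_of_pos_right _ hε)
  exact ⟨v, hv, h⟩

lemma V1_convex : ConvexOn ℝ (Reach n T A B) (V1 n T A B) := by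
  refine ⟨reach_convex, ?_⟩
  intro x hx y hy a b ha hb hab
  refine le_of_forall_pos_lt_add fun ε hε => ?_
  obtain ⟨u, hu, hu'⟩ := exists_V1 hx hε
  obtain ⟨v, hv, hv'⟩ := exists_V1 hy hε
  have h1 := V1_le (adm_comb hu hv ha hb hab)
  have h2 := L1_comb hu.1 hu.2.1 hv.1 hv.2.1 ha hb
  simp only [smul_eq_mul]
  have hb' : b = 1 - a := by linarith
  rcases ha.eq_or_lt with h | h
  · subst h
    have : b = 1 := by linarith
    subst this
    linarith
  · nlinarith

lemma V1_le_V0 {x : Fin n → ℝ} (hx : x ∈ Reach n T A B) : V1 n T A B x ≤ V0 n T A B x :=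
  le_V0 hx fun u hu => (V1_le hu).trans (L1_le_L0 T u hu.1 hu.2.1)

end Ctrl

/-- Subgradient at an interior point. -/
lemma exists_subgrad {E : Type*} [NormedAddCommGroup E] [NormedSpace ℝ E] [FiniteDimensional ℝ E]
    {C : Set E} {φ : E → ℝ} (h : ConvexOn ℝ C φ) {x : E} (hx : x ∈ interior C) :
    ∃ f : E →L[ℝ] ℝ, ∀ z ∈ C, φ x + f (z - x) ≤ φ z := by
  have hci := h.continuousOn_interior
  have hint : ConvexOn ℝ (interior C) φ := h.subset interior_subset h.1.interior
  have hop : IsOpen {p : E × ℝ | p.1 ∈ interior C ∧ φ p.1 < p.2} := by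
    have : ContinuousOn (fun p : E × ℝ => p.2 - φ p.1) (interior C ×ˢ univ) :=
      continuousOn_snd.sub (hci.comp continuousOn_fst fun p hp => hp.1)
    have h2 := this.isOpen_inter_preimage (isOpen_interior.prod isOpen_univ) (isOpen_Ioi (a := (0:ℝ)))
    convert h2 using 1
    ext p
    simp
  obtain ⟨F, hF⟩ := geometric_hahn_banach_open_point (x := (x, φ x)) hint.convex_strict_epigraph hop
    (by simp)
  have hdec : ∀ (z : E) (c : ℝ), F (z, c) = F (z, 0) + c * F (0, 1) := by
    intro z c
    have : ((z, c) : E × ℝ) = (z, 0) + c • ((0 : E), (1:ℝ)) := by simp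
    rw [this, map_add, map_smul, smul_eq_mul]
  have hb : F (0, 1) < 0 := by
    have := hF (x, φ x + 1) ⟨hx, by simp⟩
    rw [hdec x, hdec x (φ x)] at this
    linarith
  set b := F (0, 1) with hbdef
  let p : E →L[ℝ] ℝ := F.comp (ContinuousLinearMap.inl ℝ E ℝ)
  have hp : ∀ z, p z = F (z, 0) := fun z => by simp [p]
  have hloc : ∀ z ∈ interior C, p z + φ z * b ≤ p x + φ x * b := by
    intro z hz
    refine le_of_forall_pos_lt_add fun ε hε => ?_
    have := hF (z, φ z + ε / (-b)) ⟨hz, by simpa using div_pos hε (neg_pos.2 hb)⟩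
    rw [hdec z, hdec x (φ x), ← hp, ← hp] at this
    have e : ε / (-b) * b = -ε := by rw [div_neg, neg_mul, div_mul_cancel₀ _ hb.ne]
    nlinarith
  refine ⟨(-b⁻¹) • p, ?_⟩
  have hconv : ConvexOn ℝ C (fun z => φ z - ((-b⁻¹) • p) z) :=
    h.sub (((-b⁻¹) • p).toLinearMap.concaveOn h.1)
  have hmin : IsLocalMinOn (fun z => φ z - ((-b⁻¹) • p) z) C x := by
    have : ∀ᶠ z in nhdsWithin x C, z ∈ interior C :=
      nhdsWithin_le_nhds (isOpen_interior.mem_nhds hx)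
    filter_upwards [this] with z hz
    have h1 := hloc z hz
    simp only [smul_apply, smul_eq_mul]
    have hb' : b ≠ 0 := hb.ne
    have h2 : b⁻¹ * b = 1 := inv_mul_cancel₀ hb'
    have h3 : b⁻¹ < 0 := inv_lt_zero.2 hb
    have e : ∀ z, φ z - -b⁻¹ * p z = b⁻¹ * (p z + φ z * b) := by
      intro z
      field_simp
      ring
    rw [e, e]
    exact mul_le_mul_of_nonpos_left h1 h3.le
  have := IsMinOn.of_isLocalMinOn_of_convexOn (interior_subset hx) hmin hconv
  intro z hz
  have h1 := this hz
  simp only [mem_ofPred_eq] at h1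
  rw [map_sub]
  linarith

/-- Supporting functional at a non-interior point. -/
lemma exists_support {E : Type*} [NormedAddCommGroup E] [NormedSpace ℝ E] [FiniteDimensional ℝ E]
    {C : Set E} (h : Convex ℝ C) {x : E} (hxC : x ∈ C) (hx : x ∉ interior C) :
    ∃ f : E →L[ℝ] ℝ, f ≠ 0 ∧ ∀ z ∈ C, f z ≤ f x := by
  by_cases hne : (interior C).Nonempty
  · obtain ⟨f, hf⟩ := geometric_hahn_banach_open_point h.interior isOpen_interior hx
    refine ⟨f, ?_, fun z hz => ?_⟩
    · rintro rfl
      obtain ⟨y, hy⟩ := hne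
      simpa using hf y hy
    · have h1 : z ∈ closure (interior C) := by
        rw [h.closure_interior_eq_closure_of_nonempty_interior hne]
        exact subset_closure hz
      have : closure (interior C) ⊆ {z | f z ≤ f x} :=
        closure_minimal (fun y hy => (hf y hy).le) (isClosed_le f.continuous continuous_const)
      exact this h1
  · rw [h.interior_nonempty_iff_affineSpan_eq_top] at hne
    have hd : vectorSpan ℝ C < ⊤ := by
      rw [lt_top_iff_ne_top]
      intro ht
      apply hne
      rw [← direction_affineSpan] at ht
      exact (AffineSubspace.direction_eq_top_iff_of_nonempty ⟨x, subset_affineSpan ℝ C hxC⟩).1 ht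
    obtain ⟨f, hf0, hf⟩ := Submodule.exists_le_ker_of_lt_top _ hd
    refine ⟨LinearMap.toContinuousLinearMap f, ?_, fun z hz => ?_⟩
    · intro h0
      apply hf0
      ext v
      simpa using congrArg (fun g : E →L[ℝ] ℝ => g v) h0
    · have := hf (vsub_mem_vectorSpan ℝ hz hxC)
      simp only [vsub_eq_sub, LinearMap.mem_ker, map_sub] at this
      simp only [LinearMap.coe_toContinuousLinearMap']
      linarith

/-- The bang-off-bang feedback. -/
def bob (q : ℝ) : ℝ := if 1 < q then -1 else if q < -1 then 1 else 0

lemma bob_val (q : ℝ) : bob q = 0 ∨ |bob q| = 1 := by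
  unfold bob
  split_ifs <;> simp

lemma bob_abs_le (q : ℝ) : |bob q| ≤ 1 := by
  rcases bob_val q with h | h <;> simp [h]

lemma bob_meas : Measurable bob :=
  Measurable.ite measurableSet_Ioi measurable_const
    (Measurable.ite measurableSet_Iio measurable_const measurable_const)

lemma bob_ineq (q v : ℝ) (hv : |v| ≤ 1) :
    |(|q| - 1)| * |v - bob q| ≤ (|v| + v * q) - (|bob q| + bob q * q) := by
  have h := abs_le.1 hv
  have hv' := neg_abs_le v
  have hv'' := le_abs_self v
  unfold bob
  split_ifs with h1 h2
  · rw [abs_of_pos (show 0 < q by linarith), abs_of_pos (show 0 < q - 1 by linarith),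
      abs_of_nonneg (show 0 ≤ v - -1 by linarith)]
    simp only [abs_neg, abs_one]
    nlinarith
  · rw [abs_of_neg (show q < 0 by linarith), abs_of_pos (show 0 < -q - 1 by linarith),
      abs_of_nonpos (show v - 1 ≤ 0 by linarith)]
    simp only [abs_one]
    nlinarith
  · have hq : |q| ≤ 1 := abs_le.2 ⟨by linarith, by linarith⟩
    rw [abs_of_nonpos (show |q| - 1 ≤ 0 by linarith)]
    have h3 : -(|v| * |q|) ≤ v * q := by
      rw [← abs_mul]; exact neg_abs_le _
    simp only [sub_zero, abs_zero, zero_mul, add_zero]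
    nlinarith

section Final
variable {n : ℕ} {T : ℝ} {A : Matrix (Fin n) (Fin n) ℝ} {B : Fin n → ℝ}

lemma V0_eq_V1_interior (hctrb : (ctrbMatrix n A B).rank = n) (hA : A.det ≠ 0)
    {x : Fin n → ℝ} (hx : x ∈ interior (Reach n T A B)) : V0 n T A B x = V1 n T A B x := by
  have hxR := interior_subset hx
  refine le_antisymm ?_ (V1_le_V0 hxR)
  obtain ⟨f, hf⟩ := exists_subgrad V1_convex hx
  have hqc : Continuous fun s => f (gk A B s) := f.continuous.comp (gk_cont A B)
  let us : ℝ → ℝ := fun s => bob (f (gk A B s))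
  have usm : Measurable us := bob_meas.comp hqc.measurable
  have usb : MagBdd T us := fun t _ => bob_abs_le _
  have hpos : ∀ᵐ s, 0 < |(|f (gk A B s)| - 1)| := by
    by_cases h0 : f = 0
    · subst h0
      exact Filter.Eventually.of_forall fun s => by simp
    · filter_upwards [null_level A B hctrb hA f h0 1, null_level A B hctrb hA f h0 (-1)] with s h1 h2
      apply abs_pos.2
      intro h3
      rcases (abs_eq (zero_le_one)).1 (sub_eq_zero.1 h3) with h | h
      · exact h1 h
      · exact h2 h
  -- approximation of `us` by admissible controls
  have happ : ∀ η > 0, ∃ u, Admissible n T A B x u ∧ L1Norm T u ≤ V1 n T A B x + η ∧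
      ∫ s in Icc 0 T, |u s - us s| ≤ η := by
    intro η hη
    obtain ⟨ε, hε, hsm⟩ := small_of_weight T (fun s => |(|f (gk A B s)| - 1)|) (hqc.abs.sub continuous_const).abs
      (fun s => abs_nonneg _) hpos η hη
    obtain ⟨u, hu, hlt⟩ := exists_V1 hxR (lt_min hε hη)
    refine ⟨u, hu, hlt.le.trans (by gcongr; exact min_le_right _ _), ?_⟩
    obtain ⟨u1, u2, u3⟩ := hu
    apply hsm (fun s => |u s - us s|) (u1.sub usm).abs
    · intro s hs
      refine ⟨abs_nonneg _, ?_⟩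
      have h1 := abs_le.1 (u2 s hs)
      have h2 := abs_le.1 (usb s hs)
      exact abs_le.2 ⟨by linarith, by linarith⟩
    · have iu := integrable_ctrl' T u u1 1 u2
      have ius := integrable_ctrl' T us usm 1 usb
      have iuq := fInt (A := A) (B := B) f u1 u2
      have iusq := fInt (A := A) (B := B) f usm usb
      have hle : ∫ s in Icc 0 T, |(|f (gk A B s)| - 1)| * |u s - us s| ≤
          ∫ s in Icc 0 T, ((|u s| + u s * f (gk A B s)) - (|us s| + us s * f (gk A B s))) := by
        refine integral_mono_of_nonneg (Filter.Eventually.of_forall fun s => by positivity)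
          ((iu.abs.add iuq).sub (ius.abs.add iusq)) ?_
        filter_upwards [ae_restrict_mem measurableSet_Icc] with s hs
        exact bob_ineq _ _ (u2 s hs)
      have e1 : ∫ s in Icc 0 T, ((|u s| + u s * f (gk A B s)) - (|us s| + us s * f (gk A B s))) =
          (L1Norm T u + f (stateInt n T A B u)) - (L1Norm T us + f (stateInt n T A B us)) := by
        rw [f_stateInt f u1 u2, f_stateInt f usm usb]
        have d := integral_sub (iu.abs.add iuq) (ius.abs.add iusq)
        have d1 := integral_add iu.abs iuq
        have d2 := integral_add ius.abs iusq
        simp only [Pi.add_apply] at d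
        rw [d, d1, d2]
        rfl
      have hadm : Admissible n T A B (-stateInt n T A B us) us := ⟨usm, usb, by simp⟩
      have h1 := hf _ (reach_iff.2 ⟨_, hadm⟩)
      have h2 := V1_le hadm
      rw [u3] at e1
      simp only [map_neg, map_sub] at h1 e1
      have := min_le_left ε η
      linarith
  have husx : stateInt n T A B us = -x := by
    obtain ⟨M, hM⟩ := isCompact_Icc.exists_bound_of_continuousOn (s := Icc 0 T) (f := gk A B)
      (gk_cont A B).continuousOn
    rw [← sub_eq_zero, ← norm_le_zero_iff]
    refine le_of_forall_pos_le_add fun ε hε => ?_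
    have hM1 : 0 < |M| + 1 := by positivity
    obtain ⟨u, ⟨u1, u2, u3⟩, -, hu⟩ := happ (ε / (|M| + 1)) (by positivity)
    have hi : IntegrableOn (fun s => u s - us s) (Icc 0 T) :=
      (integrable_ctrl' T u u1 1 u2).sub (integrable_ctrl' T us usm 1 usb)
    have e : stateInt n T A B us - -x = ∫ s in Icc 0 T, (us s • gk A B s - u s • gk A B s) := by
      rw [← u3, integral_sub (gInt usm usb) (gInt u1 u2)]
      rfl
    rw [e]
    calc _ ≤ ∫ s in Icc 0 T, |u s - us s| * (|M| + 1) := by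
          refine norm_integral_le_of_norm_le (hi.abs.mul_const _) ?_
          filter_upwards [ae_restrict_mem measurableSet_Icc] with s hs
          rw [← sub_smul, norm_smul, Real.norm_eq_abs, abs_sub_comm]
          gcongr
          have := hM s hs
          have := le_abs_self M
          linarith
      _ = (∫ s in Icc 0 T, |u s - us s|) * (|M| + 1) := integral_mul_const _ _
      _ ≤ ε / (|M| + 1) * (|M| + 1) := by gcongr
      _ = 0 + ε := by field_simp; ring
  refine (V0_le ⟨usm, usb, husx⟩).trans ?_
  rw [L1_eq_L0 T us usm fun s => bob_val _]
  refine le_of_forall_pos_le_add fun ε hε => ?_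
  obtain ⟨u, ⟨u1, u2, u3⟩, hu1, hu⟩ := happ (ε / 2) (by positivity)
  have iu := integrable_ctrl' T u u1 1 u2
  have ius := integrable_ctrl' T us usm 1 usb
  have : L1Norm T us ≤ L1Norm T u + ∫ s in Icc 0 T, |u s - us s| := by
    have e := integral_add iu.abs (iu.sub ius).abs
    refine le_trans ?_ e.le
    refine integral_mono ius.abs (iu.abs.add (iu.sub ius).abs) fun s => ?_
    show |us s| ≤ |u s| + |u s - us s|
    have := abs_sub_abs_le_abs_sub (us s) (u s)
    rw [abs_sub_comm] at this
    linarith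
  linarith

lemma V0_near_boundary (hT : 0 < T) (hctrb : (ctrbMatrix n A B).rank = n) (hA : A.det ≠ 0)
    {x : Fin n → ℝ} (hxR : x ∈ Reach n T A B) (hx : x ∉ interior (Reach n T A B))
    {η : ℝ} (hη : 0 < η) :
    ∃ f : (Fin n → ℝ) →L[ℝ] ℝ, ∃ ε > 0, ∀ y ∈ Reach n T A B, f x - f y ≤ ε →
      T - η ≤ V0 n T A B y := by
  obtain ⟨f, hf0, hf⟩ := exists_support reach_convex hxR hx
  have hqc : Continuous fun s => f (gk A B s) := f.continuous.comp (gk_cont A B)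
  obtain ⟨ε, hε, hsm⟩ := small_of_weight T (fun s => |f (gk A B s)|) hqc.abs
      (fun s => abs_nonneg _)
      (by filter_upwards [null_level A B hctrb hA f hf0 0] with s hs using abs_pos.2 hs) η hη
  refine ⟨f, ε, hε, fun y hy hle => le_V0 hy fun u hu => ?_⟩
  obtain ⟨u1, u2, u3⟩ := hu
  have iu := integrable_ctrl' T u u1 1 u2
  have iuq := fInt (A := A) (B := B) f u1 u2
  have iq : IntegrableOn (fun s => |f (gk A B s)|) (Icc 0 T) := hqc.abs.integrableOn_Icc
  refine le_trans ?_ (L1_le_L0 T u u1 u2)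
  -- the maximal value
  have hmax : ∫ s in Icc 0 T, |f (gk A B s)| ≤ f x := by
    let v : ℝ → ℝ := fun s => if 0 ≤ f (gk A B s) then 1 else -1
    have vm : Measurable v :=
      Measurable.ite (measurableSet_le measurable_const hqc.measurable) measurable_const
        measurable_const
    have vb : MagBdd T v := fun s _ => by
      simp only [v]; split_ifs <;> simp
    have h1 := hf _ ⟨v, vm, vb, rfl⟩
    rw [f_stateInt f vm vb] at h1
    refine le_trans (le_of_eq ?_) h1
    refine integral_congr_ae (Filter.Eventually.of_forall fun s => ?_)
    simp only [v]
    split_ifs with h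
    · simp [abs_of_nonneg h]
    · simp [abs_of_neg (not_le.1 h)]
  have hfy : f y = - ∫ s in Icc 0 T, u s * f (gk A B s) := by
    rw [← f_stateInt f u1 u2, u3, map_neg, neg_neg]
  have hint := hsm (fun s => 1 - |u s|) (measurable_const.sub u1.abs)
    (fun s hs => ⟨by have := u2 s hs; linarith, by have := abs_nonneg (u s); linarith⟩) (by
      have h1 : ∫ s in Icc 0 T, |f (gk A B s)| * (1 - |u s|) ≤
          ∫ s in Icc 0 T, (|f (gk A B s)| + u s * f (gk A B s)) := by
        refine integral_mono_of_nonneg ?_ (iq.add iuq) ?_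
        · filter_upwards [ae_restrict_mem measurableSet_Icc] with s hs
          exact mul_nonneg (abs_nonneg _) (by have := u2 s hs; linarith)
        · refine Filter.Eventually.of_forall fun s => ?_
          show |f (gk A B s)| * (1 - |u s|) ≤ |f (gk A B s)| + u s * f (gk A B s)
          have := neg_abs_le (u s * f (gk A B s))
          rw [abs_mul] at this
          nlinarith
      rw [integral_add iq iuq] at h1
      linarith)
  rw [integral_sub (integrable_const _) iu.abs] at hint
  have hc : ∫ s in Icc 0 T, (1:ℝ) = T := by simp [hT.le]
  rw [hc] at hint
  simp only [L1Norm]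
  linarith

end Final

theorem value_function_continuousOn (n : ℕ) (T : ℝ) (hT : 0 < T)
    (A : Matrix (Fin n) (Fin n) ℝ) (B : Fin n → ℝ)
    (hctrb : (ctrbMatrix n A B).rank = n) (hA : A.det ≠ 0) :
    ContinuousOn (V0 n T A B) (Reach n T A B) := by
  intro x hxR
  by_cases hx : x ∈ interior (Reach n T A B)
  · have h1 : ContinuousAt (V1 n T A B) x :=
      (V1_convex (n := n) (T := T) (A := A) (B := B)).continuousOn_interior.continuousAt
        (isOpen_interior.mem_nhds hx)
    have h2 : V0 n T A B =ᶠ[nhds x] V1 n T A B := by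
      filter_upwards [isOpen_interior.mem_nhds hx] with y hy
      exact V0_eq_V1_interior hctrb hA hy
    exact (h1.congr h2.symm).continuousWithinAt
  · rw [Metric.continuousWithinAt_iff']
    intro η hη
    obtain ⟨f, ε, hε, h⟩ := V0_near_boundary hT hctrb hA hxR hx (half_pos hη)
    have hup : ∀ y ∈ Reach n T A B, V0 n T A B y ≤ T := by
      intro y hy
      obtain ⟨u, hu⟩ := reach_iff.1 hy
      exact (V0_le hu).trans (L0_le T hT u)
    have hev : ∀ᶠ y in nhdsWithin x (Reach n T A B), f x - ε < f y :=
      nhdsWithin_le_nhds (f.continuous.continuousAt.eventually (lt_mem_nhds (by linarith)))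
    filter_upwards [hev, self_mem_nhdsWithin] with y hy hyR
    have h1 := h y hyR (by linarith)
    have h2 := h x hxR (by linarith)
    have h3 := hup y hyR
    have h4 := hup x hxR
    rw [Real.dist_eq, abs_lt]
    constructor <;> linarith
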